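/- Let C be a 2-torsion free commutative ring with unity 1 ≠ 0, let n ≥ 2, and let M_n(C) be the algebra of all n×n matrices over C. Then every Jordan {g,h}-derivation f : M_n(C) → M_n(C) (with C-linear maps g, h : M_n(C) → M_n(C)) is a {g,h}-derivation, i.e. if f(x∘y) = g(x)∘y + x∘h(y) for all x, y ∈ M_n(C), then f(xy) = g(x)y + x·h(y) = h(x)y + x·g(y) for all x, y ∈ M_n(C). -/

import Mathlib

lemma mat_tf {C : Type*} [CommRing C] (htf : ∀ a : C, a + a = 0 → a = 0) {n : ℕ}
    (x : Matrix (Fin n) (Fin n) C) (hx : x + x = 0) : x = 0 := by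
  ext i j
  exact htf _ (by simpa using congrFun (congrFun hx i) j)

lemma jordan_diag_zero {C : Type*} [CommRing C] (htf : ∀ a : C, a + a = 0 → a = 0) {n : ℕ}
    (d : Matrix (Fin n) (Fin n) C →ₗ[C] Matrix (Fin n) (Fin n) C)
    (hd : ∀ x y, d (x * y + y * x) = (d x * y + y * d x) + (x * d y + d y * x))
    (h0 : ∀ i, d (Matrix.single i i 1) = 0) :
    ∀ x y, d (x * y) = d x * y + x * d y := by
  -- shape of the image of a matrix unit
  have hshape : ∀ i j, d (Matrix.single i j 1)
      = Matrix.single i j (d (Matrix.single i j 1) i j) := by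
    intro i j
    by_cases hij : i = j
    · subst hij; simp [h0]
    have hji : j ≠ i := fun h => hij h.symm
    have h1 := hd (Matrix.single i i 1) (Matrix.single i j 1)
    have h2 := hd (Matrix.single j j 1) (Matrix.single i j 1)
    have h3 := hd (Matrix.single i j 1) (Matrix.single i j 1)
    simp [h0, hij, hji] at h1 h2 h3
    have h3' := congrFun (congrFun h3 i) i
    simp at h3'
    ext p q
    have e1 := congrFun (congrFun h1 p) q
    have e2 := congrFun (congrFun h2 p) q
    simp [Matrix.mul_apply, Matrix.single_apply, Finset.sum_ite_eq, ite_and] at e1 e2 h3' ⊢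
    generalize d (Matrix.single i j 1) = D at e1 e2 h3' ⊢
    have h4 : D j i = 0 := by
      apply htf
      simp only [hji, if_false, zero_add, add_zero] at h3'
      exact h3'.symm
    clear h1 h2 h3 hd h0 htf h3'
    grind
  set α : Fin n → Fin n → C := fun i j => d (Matrix.single i j 1) i j with hα
  have hs : ∀ i j, d (Matrix.single i j 1) = Matrix.single i j (α i j) := hshape
  have hα0 : ∀ i, α i i = 0 := by intro i; simp [hα, h0]
  have hcoc : ∀ i j k, α i k = α i j + α j k := by
    intro i j k
    by_cases hij : i = j
    · subst hij; simp [hα0]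
    by_cases hjk : j = k
    · subst hjk; simp [hα0]
    have h1 := hd (Matrix.single i j 1) (Matrix.single j k 1)
    by_cases hik : i = k
    · subst hik
      have e := congrFun (congrFun h1 i) i
      simp [hs, hα0, hij, hjk, Matrix.single_apply] at e
      rw [hα0]; exact e
    · have hki : k ≠ i := fun h => hik h.symm
      have e := congrFun (congrFun h1 i) k
      simp [hs, hα0, hij, hjk, hik, hki, Matrix.single_apply] at e
      exact e
  let B1 : Matrix (Fin n) (Fin n) C →ₗ[C] Matrix (Fin n) (Fin n) C →ₗ[C]
    Matrix (Fin n) (Fin n) C := (LinearMap.mul C _).compr₂ d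
  let B2 : Matrix (Fin n) (Fin n) C →ₗ[C] Matrix (Fin n) (Fin n) C →ₗ[C]
    Matrix (Fin n) (Fin n) C := (LinearMap.mul C _).comp d + (LinearMap.mul C _).compl₂ d
  have hB : B1 = B2 := by
    apply Matrix.ext_linearMap
    intro i j
    ext1
    apply Matrix.ext_linearMap
    intro k l
    ext1
    simp [B1, B2]
    by_cases hjk : j = k
    · subst hjk
      simp [hs, ← Matrix.single_add, ← hcoc]
    · simp [hs, hjk]
  intro x y
  exact congrArg (fun B => B x y) hB

lemma jordan_der {C : Type*} [CommRing C] (htf : ∀ a : C, a + a = 0 → a = 0) {n : ℕ}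
    (d : Matrix (Fin n) (Fin n) C →ₗ[C] Matrix (Fin n) (Fin n) C)
    (hd : ∀ x y, d (x * y + y * x) = (d x * y + y * d x) + (x * d y + d y * x)) :
    ∀ x y, d (x * y) = d x * y + x * d y := by
  let u : Matrix (Fin n) (Fin n) C := Matrix.of fun i j => d (Matrix.single j j 1) i j
  let d' := d - (LinearMap.mulLeft C u - LinearMap.mulRight C u)
  have hd'x : ∀ x, d' x = d x - (u * x - x * u) := fun x => rfl
  have key := jordan_diag_zero htf d' ?_ ?_
  · intro x y
    have := key x y
    rw [hd'x, hd'x, hd'x] at this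
    linear_combination (norm := noncomm_ring) this
  · intro x y
    rw [hd'x, hd'x, hd'x, hd]
    noncomm_ring
  · intro i
    rw [hd'x, sub_eq_zero]
    ext p q
    have h1 := hd (Matrix.single i i 1) (Matrix.single i i 1)
    have e1 := congrFun (congrFun h1 p) q
    have h2 := hd (Matrix.single i i 1) (Matrix.single q q 1)
    have e2 := congrFun (congrFun h2 i) q
    simp [Matrix.mul_apply, Matrix.single_apply, ite_and, u] at e1 e2 ⊢
    by_cases hp : i = p <;> by_cases hq : i = q
    · subst hp; subst hq; simp at e1 ⊢
      apply htf; linear_combination e1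
    · subst hp
      have hq' : ¬ q = i := fun h => hq h.symm
      simp [hq, hq'] at e2 ⊢
      linear_combination -e2
    · subst hq; simp [hp] 
    · simp [hp, hq] at e1 ⊢
      exact htf _ e1

lemma central_of_single {C : Type*} [CommRing C] {n : ℕ} (hn : 2 ≤ n)
    (b : Matrix (Fin n) (Fin n) C)
    (hb : ∀ i j, i ≠ j → b * Matrix.single i j 1 = Matrix.single i j 1 * b) :
    ∀ x, b * x = x * b := by
  have : b ∈ Set.range (Matrix.scalar (Fin n)) :=
    Matrix.mem_range_scalar_of_commute_single fun i j hij => (hb i j hij).symm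
  obtain ⟨r, rfl⟩ := this
  intro x
  exact (Matrix.scalar_commute r (fun r' => mul_comm _ _) x)

theorem jordan_gh_derivation_is_gh_derivation_of_matrix
    (C : Type*) [CommRing C] (hone : (1 : C) ≠ 0)
    (htf : ∀ a : C, a + a = 0 → a = 0)
    (n : ℕ) (hn : 2 ≤ n)
    (f g h : Matrix (Fin n) (Fin n) C →ₗ[C] Matrix (Fin n) (Fin n) C)
    (hJordan : ∀ x y : Matrix (Fin n) (Fin n) C,
      f (x * y + y * x) = (g x * y + y * g x) + (x * h y + h y * x)) :
    ∀ x y : Matrix (Fin n) (Fin n) C,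
      f (x * y) = g x * y + x * h y ∧ f (x * y) = h x * y + x * g y := by
  have tf := fun x => mat_tf (n := n) htf x
  obtain ⟨b, hb⟩ : ∃ b, b = h 1 := ⟨_, rfl⟩
  obtain ⟨c, hc⟩ : ∃ c, c = g 1 := ⟨_, rfl⟩
  have hsym : ∀ x y, (g x * y + y * g x) + (x * h y + h y * x)
      = (g y * x + x * g y) + (y * h x + h x * y) := by
    intro x y
    rw [← hJordan, ← hJordan, add_comm]
  have hf1 : ∀ x, f x + f x = g x + g x + (x * b + b * x) := by
    intro x; have := hJordan x 1; simpa [← hb] using this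
  have hf2 : ∀ x, f x + f x = h x + h x + (x * c + c * x) := by
    intro x
    have := hJordan 1 x
    simp [← hc] at this
    rw [this]; abel
  -- c - b is central
  have ha : ∀ x, (c - b) * x = x * (c - b) := by
    apply central_of_single hn
    intro i j hij
    have hcomm : ∀ x y : Matrix (Fin n) (Fin n) C,
        (c - b) * (x * y - y * x) = (x * y - y * x) * (c - b) := by
      intro x y
      have s := hsym x y
      have d1 : (g x - h x) + (g x - h x) = x * (c - b) + (c - b) * x := by
        linear_combination (norm := noncomm_ring) hf2 x - hf1 x
      have d2 : (g y - h y) + (g y - h y) = y * (c - b) + (c - b) * y := by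
        linear_combination (norm := noncomm_ring) hf2 y - hf1 y
      have d1l := congrArg (fun z => y * z) d1
      have d1r := congrArg (fun z => z * y) d1
      have d2l := congrArg (fun z => x * z) d2
      have d2r := congrArg (fun z => z * x) d2
      linear_combination (norm := noncomm_ring) s + s - d1l - d1r + d2l + d2r
    have := hcomm (Matrix.single i i 1) (Matrix.single i j 1)
    have hji : j ≠ i := fun h => hij h.symm
    simpa [hij, hji] using this
  -- b + c commutes with idempotents
  have hidem : ∀ e : Matrix (Fin n) (Fin n) C, e * e = e → (b + c) * e = e * (b + c) := by
    intro e he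
    have h1 := hJordan e e
    rw [he, map_add] at h1
    have k1 := hf1 e
    have k2 := hf2 e
    obtain ⟨F, hF⟩ : ∃ F, F = f e + f e := ⟨_, rfl⟩
    have m : F + F = F * e + e * F + (e * F + F * e)
        - ((e * (b + c) + (b + c) * e) * e + e * (e * (b + c) + (b + c) * e)) := by
      have k1l := congrArg (fun z => e * z) k1
      have k1r := congrArg (fun z => z * e) k1
      have k2l := congrArg (fun z => e * z) k2
      have k2r := congrArg (fun z => z * e) k2
      rw [hF]
      linear_combination (norm := noncomm_ring) h1 + h1 - k1l - k1r - k2l - k2r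
    have he' : ∀ z, e * (e * z) = e * z := fun z => by rw [← mul_assoc, he]
    have ml := congrArg (fun z => e * z) m
    have mr := congrArg (fun z => z * e) m
    simp only [mul_add, add_mul, mul_sub, sub_mul, mul_assoc, he, he'] at ml mr ⊢
    linear_combination (norm := noncomm_ring) mr - ml
  have hbc : ∀ x, (b + c) * x = x * (b + c) := by
    apply central_of_single hn
    intro i j hij
    have hji : j ≠ i := fun h => hij h.symm
    have h1 := hidem (Matrix.single i i 1) (by simp)
    have h2 := hidem (Matrix.single i i 1 + Matrix.single i j 1)
      (by simp [mul_add, add_mul, hij, hji])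
    linear_combination (norm := noncomm_ring) h2 - h1
  have hbC : ∀ x, b * x = x * b := by
    intro x
    rw [← sub_eq_zero]
    apply tf
    linear_combination (norm := noncomm_ring) hbc x - ha x
  have hcC : ∀ x, c * x = x * c := by
    intro x
    linear_combination (norm := noncomm_ring) hbc x - hbC x
  have hg : ∀ x, g x = f x - b * x := by
    intro x
    rw [← sub_eq_zero]
    apply tf
    linear_combination (norm := noncomm_ring) - hf1 x + hbC x
  have hh : ∀ x, h x = f x - c * x := by
    intro x
    rw [← sub_eq_zero]
    apply tf
    linear_combination (norm := noncomm_ring) - hf2 x + hcC x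
  have hbx : ∀ x y, x * (b * y) = b * (x * y) := fun x y => by
    rw [← mul_assoc, ← hbC, mul_assoc]
  have hcx : ∀ x y, x * (c * y) = c * (x * y) := fun x y => by
    rw [← mul_assoc, ← hcC, mul_assoc]
  let d := f - LinearMap.mulLeft C (b + c)
  have hdx : ∀ x, d x = f x - (b + c) * x := fun x => rfl
  have key := jordan_der htf d (by
    intro x y
    rw [hdx, hdx, hdx, hJordan, hg, hh]
    simp only [mul_add, add_mul, mul_sub, sub_mul, mul_assoc, hbx, hcx]
    abel)
  intro x y
  have k := key x y
  simp only [hdx] at k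
  simp only [hg, hh]
  simp only [mul_add, add_mul, mul_sub, sub_mul, mul_assoc, hbx, hcx] at k ⊢
  constructor
  · linear_combination (norm := noncomm_ring) k
  · linear_combination (norm := noncomm_ring) k
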